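/- arXiv:2001.09696 — 2 statements merged into one kernel-verified Lean document; each statement's English description precedes it below -/
import Mathlib

section
/- For all natural numbers L, K with K ≥ 1 and every natural number s, the number of command vectors c : Fin L → Fin K with Σ_l (c(l) : ℕ) = s is at most the number of command vectors c : Fin L → Fin K with Σ_l (c(l) : ℕ) = ⌊L·(K−1)/2⌋. In particular the central input unit receives at least as many output-to-input paths as any other input unit. -/
/-!
Write `f L` for the coefficient sequence of `(1 + X + ⋯ + X ^ k) ^ L` with `K = k + 1`, indexed by
`ℤ` so that shifts need no case distinctions. It satisfies `f (L + 1) s = ∑ j ≤ k, f L (s - j)`.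
By induction on `L`, `f L` is symmetric about `L * k / 2` and nonincreasing in the distance to that
centre (`pathCount_le_of_abs_le`). The induction step rests on the telescoping identity
`f (L + 1) (s + 1) - f (L + 1) s = f L (s + 1) - f L (s - k)`: as long as `s + 1` is not beyond the
centre for `L + 1` by more than `1 / 2`, the point `s + 1` is at least as close to the centre for
`L` as `s - k` is, so the difference is nonnegative. The theorem follows because
`⌊L * k / 2⌋` is an integer closest to `L * k / 2`.
-/

/-- The coefficient of `X ^ s` in `(1 + X + ⋯ + X ^ k) ^ L`, defined by its recurrence in `L` and
extended by zero to negative `s`. -/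
def pathCount (k : ℕ) : ℕ → ℤ → ℕ
  | 0, s => if s = 0 then 1 else 0
  | L + 1, s => ∑ j ∈ Finset.range (k + 1), pathCount k L (s - j)

lemma card_filter_sum_eq_pathCount (k L : ℕ) (s : ℤ) :
    (Finset.univ.filter
      (fun c : Fin L → Fin (k + 1) => ∑ l : Fin L, ((c l : ℕ) : ℤ) = s)).card =
      pathCount k L s := by
  induction L generalizing s with
  | zero =>
    by_cases h : s = 0
    · simp [pathCount, h]
    · simp [pathCount, h, Ne.symm h]
  | succ L ih =>
    rw [pathCount, Finset.sum_range, Finset.card_filter,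
      ← (Fin.consEquiv (fun _ : Fin (L + 1) => Fin (k + 1))).sum_comp, Fintype.sum_prod_type]
    refine Finset.sum_congr rfl fun j _ => ?_
    rw [← ih, Finset.card_filter]
    refine Finset.sum_congr rfl fun c _ => ?_
    simp only [Fin.consEquiv, Equiv.coe_fn_mk, Fin.sum_univ_succ, Fin.cons_zero, Fin.cons_succ,
      eq_sub_iff_add_eq']

/-- The two windows of length `k + 1` ending at `s + 1` and at `s` differ only at their ends. -/
lemma pathCount_succ_add (k L : ℕ) (s : ℤ) :
    pathCount k (L + 1) (s + 1) + pathCount k L (s - k) =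
      pathCount k (L + 1) s + pathCount k L (s + 1) := by
  have e : ∀ j : ℕ, s + 1 - ((j + 1 : ℕ) : ℤ) = s - j := fun j => by push_cast; ring
  rw [pathCount, pathCount, Finset.sum_range_succ', Finset.sum_range_succ]
  simp only [e, Nat.cast_zero, sub_zero]
  ring

/-- The sequence `pathCount k L` is symmetric and unimodal about `L * k / 2`: the closer an index is
to the centre, the larger the value. -/
lemma pathCount_le_of_abs_le (k L : ℕ) (a b : ℤ) (h : |2 * b - L * k| ≤ |2 * a - L * k|) :
    pathCount k L a ≤ pathCount k L b := by
  induction L generalizing a b with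
  | zero =>
    by_cases ha : a = 0
    · have hb : b = 0 := by
        have h' : |2 * b| ≤ 0 := by simpa [ha] using h
        have := abs_nonpos_iff.1 h'
        omega
      rw [ha, hb]
    · simp [pathCount, ha]
  | succ L ih =>
    have hM : ((L + 1 : ℕ) : ℤ) * k = L * k + k := by push_cast; ring
    rw [hM] at h
    generalize hm : (L : ℤ) * k = M at h ih
    have step : ∀ s : ℤ, 2 * s + 1 ≤ M + k →
        pathCount k (L + 1) s ≤ pathCount k (L + 1) (s + 1) := fun s hs => by
      have h1 := pathCount_succ_add k L s
      have h2 := ih (s - k) (s + 1) (by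
        rw [abs_of_nonpos (a := 2 * (s - k) - M) (by omega), abs_le]
        constructor <;> omega)
      omega
    have mono : ∀ (n : ℕ) (s : ℤ), 2 * (s + n) ≤ M + k + 1 →
        pathCount k (L + 1) s ≤ pathCount k (L + 1) (s + n) := fun n => by
      induction n with
      | zero => intro s _; simp
      | succ n ihn =>
        intro s hs
        push_cast at hs ⊢
        rw [← add_assoc]
        exact (ihn s (by omega)).trans (step _ (by omega))
    have mono' : ∀ s t : ℤ, s ≤ t → 2 * t ≤ M + k + 1 →
        pathCount k (L + 1) s ≤ pathCount k (L + 1) t := fun s t hst ht => by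
      obtain ⟨n, rfl⟩ := Int.le.dest hst
      exact mono n s ht
    have symm : ∀ s : ℤ, pathCount k (L + 1) (M + k - s) = pathCount k (L + 1) s := fun s => by
      rw [pathCount, pathCount, ← Finset.sum_range_reflect]
      refine Finset.sum_congr rfl fun j hj => ?_
      have hj' := Finset.mem_range.1 hj
      have e : M + k - s - ((k + 1 - 1 - j : ℕ) : ℤ) = M - (s - j) := by omega
      have habs : |2 * (M - (s - j)) - M| = |2 * (s - j) - M| := by
        rw [← abs_neg]; congr 1; ring
      rw [e]
      exact le_antisymm (ih _ _ habs.ge) (ih _ _ habs.le)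
    -- Reflect `a` and `b` into the left half, where the sequence is monotone.
    rcases le_total (2 * a) (M + k) with ha | ha <;>
      rcases le_total (2 * b) (M + k) with hb | hb
    · rw [abs_of_nonpos (by omega), abs_of_nonpos (by omega)] at h
      exact mono' _ _ (by omega) (by omega)
    · rw [abs_of_nonneg (by omega), abs_of_nonpos (by omega)] at h
      rw [← symm b]
      exact mono' _ _ (by omega) (by omega)
    · rw [abs_of_nonpos (by omega), abs_of_nonneg (by omega)] at h
      rw [← symm a]
      exact mono' _ _ (by omega) (by omega)
    · rw [abs_of_nonneg (by omega), abs_of_nonneg (by omega)] at h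
      rw [← symm a, ← symm b]
      exact mono' _ _ (by omega) (by omega)

/-- the central input unit receives at least as many output-to-input paths
as any other input unit. For every offset `s`, the number of command vectors
`c : Fin L → Fin K` with `Σ_l c l = s` is at most the number of those with
`Σ_l c l = ⌊L·(K−1)/2⌋`. -/
theorem card_command_vectors_le_central (L K : ℕ) (hK : 1 ≤ K) (s : ℕ) :
    (Finset.univ.filter
        (fun c : Fin L → Fin K => ∑ l : Fin L, (c l : ℕ) = s)).card ≤
      (Finset.univ.filter
        (fun c : Fin L → Fin K => ∑ l : Fin L, (c l : ℕ) = L * (K - 1) / 2)).card := by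
  obtain ⟨k, rfl⟩ : ∃ k, K = k + 1 := ⟨K - 1, by omega⟩
  have key : ∀ t : ℕ, (Finset.univ.filter
      (fun c : Fin L → Fin (k + 1) => ∑ l : Fin L, (c l : ℕ) = t)).card =
      pathCount k L t := fun t => by
    rw [← card_filter_sum_eq_pathCount]
    congr 1
    ext c
    simp only [Finset.mem_filter, Finset.mem_univ, true_and]
    exact_mod_cast Iff.rfl
  rw [key, key]
  apply pathCount_le_of_abs_le
  rw [Nat.add_sub_cancel, ← Nat.cast_mul]
  generalize L * k = M
  -- `2 * s - M` has the parity of `M`, so its absolute value is at least `M % 2`.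
  rcases abs_cases (2 * ((M / 2 : ℕ) : ℤ) - M) with h | h <;>
    rcases abs_cases (2 * (s : ℤ) - M) with h' | h' <;> omega
end

section
/- Let N, M ≥ 1, let T : (Fin M → ℝ) →ₗ[ℝ] (Fin N → ℝ) be a linear map, fix j ∈ Fin N, and let h : Fin M → ℝ satisfy sd(T h) ≠ 0. Then for every real c > 0, the functions u ↦ z((c·T) u)(j) and u ↦ z(T u)(j) are equal on a neighbourhood of h; in particular they have the same Fréchet derivative at h. Hence the output-to-input gradient of a BatchNorm-composed linear (convolutional) layer is independent of a positive rescaling of the layer's weights. -/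
/-! The mean and the standard deviation are both homogeneous of degree one under multiplication
by `c > 0`, so the factor `c` cancels in the quotient defining the standardization
(`batchNorm_smul`). The two functions in the theorem are therefore equal everywhere, in
particular near `h`, and so are their derivatives. -/

/-- The empirical mean of a vector `v : Fin N → ℝ`. -/
noncomputable def batchMean {N : ℕ} (v : Fin N → ℝ) : ℝ :=
  (∑ i, v i) / N

/-- The (biased) empirical standard deviation of a vector `v : Fin N → ℝ`. -/
noncomputable def batchSd {N : ℕ} (v : Fin N → ℝ) : ℝ :=
  Real.sqrt ((∑ i, (v i - batchMean v) ^ 2) / N)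

/-- The standardization (BatchNorm z-scoring with unit scale and zero shift) of a vector. -/
noncomputable def batchNorm {N : ℕ} (v : Fin N → ℝ) : Fin N → ℝ :=
  fun j => (v j - batchMean v) / batchSd v

theorem batchMean_smul {N : ℕ} (c : ℝ) (v : Fin N → ℝ) :
    batchMean (c • v) = c * batchMean v := by
  simp only [batchMean, Pi.smul_apply, smul_eq_mul, ← Finset.mul_sum, mul_div_assoc]

theorem batchSd_smul {N : ℕ} {c : ℝ} (hc : 0 ≤ c) (v : Fin N → ℝ) :
    batchSd (c • v) = c * batchSd v := by
  simp only [batchSd, batchMean_smul, Pi.smul_apply, smul_eq_mul, ← mul_sub, mul_pow,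
    ← Finset.mul_sum, mul_div_assoc]
  rw [Real.sqrt_mul (sq_nonneg c), Real.sqrt_sq hc]

/-- Standardization is invariant under positive rescaling. This holds for every `v`: when
`batchSd v = 0` both sides are `0` by the convention `x / 0 = 0`. -/
theorem batchNorm_smul {N : ℕ} {c : ℝ} (hc : 0 < c) (v : Fin N → ℝ) :
    batchNorm (c • v) = batchNorm v := by
  funext j
  simp only [batchNorm, batchMean_smul, batchSd_smul hc.le, Pi.smul_apply, smul_eq_mul,
    ← mul_sub]
  exact mul_div_mul_left _ _ (ne_of_gt hc)

/-- BatchNorm decouples the weight scale from the input-unit importance,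
Appendix C of the paper. For a linear (convolutional) layer `T` followed by BatchNorm, and a
point `h` where `sd (T h) ≠ 0`, rescaling the weights by any `c > 0` leaves the function
`u ↦ z(T u)(j)` unchanged on a neighbourhood of `h`; in particular the Fréchet derivative at
`h` — the output-to-input gradient — is independent of the rescaling. -/
theorem batchNorm_comp_linear_scale_invariant {N M : ℕ} (hN : 1 ≤ N) (hM : 1 ≤ M)
    (T : (Fin M → ℝ) →ₗ[ℝ] (Fin N → ℝ)) (j : Fin N)
    (h : Fin M → ℝ) (hsd : batchSd (T h) ≠ 0) (c : ℝ) (hc : 0 < c) :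
    (fun u : Fin M → ℝ => batchNorm ((c • T) u) j) =ᶠ[nhds h]
        (fun u : Fin M → ℝ => batchNorm (T u) j) ∧
      fderiv ℝ (fun u : Fin M → ℝ => batchNorm ((c • T) u) j) h =
        fderiv ℝ (fun u : Fin M → ℝ => batchNorm (T u) j) h := by
  have key : (fun u : Fin M → ℝ => batchNorm ((c • T) u) j) =
      (fun u : Fin M → ℝ => batchNorm (T u) j) := by
    funext u
    rw [LinearMap.smul_apply, batchNorm_smul hc]
  exact ⟨Filter.EventuallyEq.of_eq key, by rw [key]⟩
end
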